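/- arXiv:1910.04022 — 2 statements merged into one kernel-verified Lean document; each statement's English description precedes it below -/
import Mathlib

section
/- Let G be a finite simple graph on M vertices with adjacency matrix A, and let D(x) be the 2M×2M matrix [[A, xI],[xI, A]] (the adjacency matrix of the prism G □ P₂(x)). Then the signless displaced GBS polynomial equals the signless matching polynomial of the prism: Σ_{S ⊆ [M]} (μ⁺(A_{S,S}, z))² x^{M−|S|} = μ⁺(D(x), z), where μ⁺(B, z) = Σ_{T} haf(B_{T,T}) z^{dim(B)−|T|} is the signless matching polynomial of the weighted graph with adjacency matrix B. -/
open Finset Polynomial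

/-- The hafnian of an `n × n` matrix: `(1/((n/2)! 2^(n/2))) ∑_{σ} ∏_j A_{σ(2j), σ(2j+1)}`,
taken to be `0` when `n` is odd and `1` for the empty matrix. -/
noncomputable def haf {F : Type*} [Field F] {n : ℕ} (A : Matrix (Fin n) (Fin n) F) : F :=
  if h : 2 ∣ n then
    (((n / 2).factorial * 2 ^ (n / 2) : ℕ) : F)⁻¹ *
      ∑ σ : Equiv.Perm (Fin n), ∏ j : Fin (n / 2),
        A (σ ⟨2 * j.1, by have h1 := Nat.div_mul_cancel h; have h2 := j.isLt; omega⟩)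
          (σ ⟨2 * j.1 + 1, by have h1 := Nat.div_mul_cancel h; have h2 := j.isLt; omega⟩)
  else 0

/-- The principal submatrix of `A` indexed by the subset `S` of the rows/columns. -/
def subm {F : Type*} {M : ℕ} (A : Matrix (Fin M) (Fin M) F) (S : Finset (Fin M)) :
    Matrix (Fin S.card) (Fin S.card) F :=
  fun i j => A (S.orderEmbOfFin rfl i) (S.orderEmbOfFin rfl j)

/-- The GBS polynomial `∑_{S ⊆ V} (-1)^{|S|/2} haf(A_S)² x^{M-|S|}`. -/
noncomputable def GBS {F : Type*} [Field F] {M : ℕ} (A : Matrix (Fin M) (Fin M) F) :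
    Polynomial F :=
  ∑ S : Finset (Fin M),
    Polynomial.C ((-1 : F) ^ (S.card / 2) * (haf (subm A S)) ^ 2) * Polynomial.X ^ (M - S.card)

/-- The signless GBS polynomial `∑_{S ⊆ V} haf(A_S)² x^{M-|S|}`. -/
noncomputable def GBSplus {F : Type*} [Field F] {M : ℕ} (A : Matrix (Fin M) (Fin M) F) :
    Polynomial F :=
  ∑ S : Finset (Fin M), Polynomial.C ((haf (subm A S)) ^ 2) * Polynomial.X ^ (M - S.card)

/-- The signless matching polynomial `μ⁺(A, z) = ∑_{T} haf(A_{T,T}) z^{M-|T|}`. -/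
noncomputable def muPlus {F : Type*} [Field F] {M : ℕ} (A : Matrix (Fin M) (Fin M) F) :
    Polynomial F :=
  ∑ S : Finset (Fin M), Polynomial.C (haf (subm A S)) * Polynomial.X ^ (M - S.card)

/-- The (signed) matching polynomial `μ(A, z) = ∑_{T} (-1)^{|T|/2} haf(A_{T,T}) z^{M-|T|}`. -/
noncomputable def matchPoly {F : Type*} [Field F] {M : ℕ} (A : Matrix (Fin M) (Fin M) F) :
    Polynomial F :=
  ∑ S : Finset (Fin M),
    Polynomial.C ((-1 : F) ^ (S.card / 2) * haf (subm A S)) * Polynomial.X ^ (M - S.card)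

/-- The adjacency matrix `[[A, xI],[xI, A]]` of the prism `G □ P₂(x)` over the graph
with adjacency matrix `A`. -/
noncomputable def prism {F : Type*} [Field F] {M : ℕ} (A : Matrix (Fin M) (Fin M) F) (x : F) :
    Matrix (Fin (M + M)) (Fin (M + M)) F :=
  Matrix.submatrix (Matrix.fromBlocks A (x • 1) (x • 1) A) finSumFinEquiv.symm finSumFinEquiv.symm

/-- The adjacency matrix `A₁ ⊕ A₂` of the disjoint union of two graphs. -/
def dsum {F : Type*} [Zero F] {M N : ℕ} (A : Matrix (Fin M) (Fin M) F)
    (B : Matrix (Fin N) (Fin N) F) : Matrix (Fin (M + N)) (Fin (M + N)) F :=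
  Matrix.submatrix (Matrix.fromBlocks A 0 0 B) finSumFinEquiv.symm finSumFinEquiv.symm

/-- Auxiliary hafnian functional, with `n` the size, given by the Euler-type recursion. -/
noncomputable def auxE {V : Type*} [DecidableEq V] (B : Matrix V V ℝ) : ℕ → Finset V → ℝ
  | 0, _ => 1
  | 1, _ => 0
  | (n + 2), S => ((n : ℝ) + 2)⁻¹ *
      ∑ a ∈ S, ∑ b ∈ S.erase a, B a b * auxE B n ((S.erase a).erase b)

/-- Hafnian of a subset. -/
noncomputable def auxH {V : Type*} [DecidableEq V] (B : Matrix V V ℝ) (S : Finset V) : ℝ :=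
  auxE B S.card S

theorem auxE_odd {V : Type*} [DecidableEq V] (B : Matrix V V ℝ) (k : ℕ) (S : Finset V) :
    auxE B (2 * k + 1) S = 0 := by
  induction k generalizing S with
  | zero => simp [auxE]
  | succ k ih =>
    rw [show 2 * (k + 1) + 1 = (2 * k + 1) + 2 by ring, auxE]
    simp [ih]

theorem auxH_empty {V : Type*} [DecidableEq V] (B : Matrix V V ℝ) : auxH B ∅ = 1 := by
  simp [auxH, auxE]

theorem auxH_rec {V : Type*} [DecidableEq V] (B : Matrix V V ℝ) (S : Finset V) :
    (S.card : ℝ) * auxH B S =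
      ∑ a ∈ S, ∑ b ∈ S.erase a, B a b * auxH B ((S.erase a).erase b) := by
  unfold auxH
  rcases h : S.card with _ | _ | n
  · rw [Finset.card_eq_zero] at h
    subst h; simp
  · rw [Finset.card_eq_one] at h
    obtain ⟨a, rfl⟩ := h
    simp [auxE]
  · rw [auxE]
    push_cast
    have hn : (n : ℝ) + 1 + 1 ≠ 0 := by positivity
    rw [show (n : ℝ) + 2 = n + 1 + 1 by ring, ← mul_assoc, mul_inv_cancel₀ hn, one_mul]
    refine Finset.sum_congr rfl fun a ha => Finset.sum_congr rfl fun b hb => ?_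
    rw [Finset.card_erase_of_mem hb, Finset.card_erase_of_mem ha, h]
    rfl

/-- The recursion determines the functional. -/
theorem auxH_unique {V : Type*} [DecidableEq V] (B : Matrix V V ℝ) (f : Finset V → ℝ)
    (h0 : f ∅ = 1)
    (hr : ∀ S : Finset V, (S.card : ℝ) * f S =
      ∑ a ∈ S, ∑ b ∈ S.erase a, B a b * f ((S.erase a).erase b)) (S : Finset V) :
    f S = auxH B S := by
  induction S using Finset.strongInduction with
  | H S ih =>
    rcases S.eq_empty_or_nonempty with rfl | hS
    · rw [h0, auxH_empty]
    · have hc : (S.card : ℝ) ≠ 0 := by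
        simpa using hS.ne_empty
      apply mul_left_cancel₀ hc
      rw [hr, auxH_rec]
      refine Finset.sum_congr rfl fun a ha => Finset.sum_congr rfl fun b hb => ?_
      rw [ih]
      exact (Finset.erase_ssubset hb).trans (Finset.erase_ssubset ha)

theorem auxH_map {V W : Type*} [DecidableEq V] [DecidableEq W] (B : Matrix W W ℝ) (e : V ↪ W)
    (S : Finset V) : auxH (B.submatrix e e) S = auxH B (S.map e) := by
  symm
  apply auxH_unique _ (fun S => auxH B (S.map e))
  · simp [auxH_empty]
  · intro S
    have := auxH_rec B (S.map e)
    rw [Finset.card_map] at this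
    rw [this, Finset.sum_map]
    refine Finset.sum_congr rfl fun a ha => ?_
    rw [← Finset.map_erase, Finset.sum_map]
    refine Finset.sum_congr rfl fun b hb => ?_
    rw [← Finset.map_erase]
    rfl

theorem sum_cons_aux {V : Type*} [DecidableEq V] [Fintype V] (n : ℕ) (S : Finset V)
    (F : (Fin (n + 1) → V) → ℝ) :
    (∑ g ∈ Finset.univ.filter
      (fun g : Fin (n + 1) → V => Function.Injective g ∧ ∀ i, g i ∈ S), F g) =
    ∑ a ∈ S, ∑ g ∈ Finset.univ.filter
      (fun g : Fin n → V => Function.Injective g ∧ ∀ i, g i ∈ S.erase a), 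
        F (Fin.cons a g : Fin (n + 1) → V) := by
  rw [Finset.sum_filter, ← (Fin.consEquiv (fun _ : Fin (n + 1) => V)).sum_comp,
    Fintype.sum_prod_type, ← Finset.sum_subset (Finset.subset_univ S)]
  · refine Finset.sum_congr rfl fun a ha => ?_
    rw [Finset.sum_filter]
    refine Finset.sum_congr rfl fun g _ => ?_
    have : (Function.Injective (Fin.cons a g : Fin (n + 1) → V) ∧
        ∀ i, (Fin.cons a g : Fin (n + 1) → V) i ∈ S) ↔
        (Function.Injective g ∧ ∀ i, g i ∈ S.erase a) := by
      rw [Fin.cons_injective_iff, Fin.forall_fin_succ]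
      simp only [Fin.cons_zero, Fin.cons_succ, Set.mem_range, not_exists, Finset.mem_erase]
      constructor
      · rintro ⟨⟨h1, h2⟩, _, h4⟩
        exact ⟨h2, fun i => ⟨h1 i, h4 i⟩⟩
      · rintro ⟨h1, h2⟩
        exact ⟨⟨fun i => (h2 i).1, h1⟩, ha, fun i => (h2 i).2⟩
    by_cases hg : Function.Injective g ∧ ∀ i, g i ∈ S.erase a
    · rw [if_pos hg]
      exact if_pos (this.mpr hg)
    · rw [if_neg hg]
      exact if_neg (fun h => hg (this.mp h))
  · intro a _ ha
    refine Finset.sum_eq_zero fun g _ => ?_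
    rw [if_neg]
    rintro ⟨_, h⟩
    exact ha (h 0)

theorem sum_inj_aux {V : Type*} [DecidableEq V] [Fintype V] (B : Matrix V V ℝ) (k : ℕ)
    (S : Finset V) :
    (∑ g ∈ Finset.univ.filter
      (fun g : Fin (2 * k) → V => Function.Injective g ∧ ∀ i, g i ∈ S),
        ∏ j : Fin k, B (g ⟨2 * j.1, by omega⟩) (g ⟨2 * j.1 + 1, by omega⟩)) =
    ((k.factorial * 2 ^ k : ℕ) : ℝ) * auxE B (2 * k) S := by
  induction k generalizing S with
  | zero =>
    have : (Finset.univ.filter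
      (fun g : Fin (2 * 0) → V => Function.Injective g ∧ ∀ i, g i ∈ S)) = Finset.univ := by
      ext g
      simp only [Finset.mem_filter, Finset.mem_univ, true_and, iff_true]
      exact ⟨fun i => i.elim0, fun i => i.elim0⟩
    rw [this]
    simp [auxE]
  | succ k ih =>
    have h1 := sum_cons_aux (2 * k + 1) S (fun g => ∏ j : Fin (k + 1),
      B (g ⟨2 * j.1, by omega⟩) (g ⟨2 * j.1 + 1, by omega⟩))
    refine h1.trans ?_
    rw [Finset.sum_congr rfl fun a _ => sum_cons_aux (2 * k) (S.erase a) _]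
    have h2 : ∀ (a b : V) (g : Fin (2 * k) → V), (∏ j : Fin (k + 1),
        B ((Fin.cons a (Fin.cons b g : Fin (2 * k + 1) → V) : Fin (2 * k + 1 + 1) → V)
            ⟨2 * j.1, by omega⟩)
          ((Fin.cons a (Fin.cons b g : Fin (2 * k + 1) → V) : Fin (2 * k + 1 + 1) → V)
            ⟨2 * j.1 + 1, by omega⟩)) =
        B a b * ∏ j : Fin k, B (g ⟨2 * j.1, by omega⟩) (g ⟨2 * j.1 + 1, by omega⟩) := by
      intro a b g
      rw [Fin.prod_univ_succ]
      rfl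
    refine (Finset.sum_congr rfl fun a _ => Finset.sum_congr rfl fun b _ =>
      (Finset.sum_congr rfl fun g _ => h2 a b g).trans
        ((Finset.mul_sum _ _ _).symm.trans (congrArg (B a b * ·) (ih _)))).trans ?_
    rw [show 2 * (k + 1) = 2 * k + 2 by ring, auxE]
    simp only [Finset.mul_sum]
    refine Finset.sum_congr rfl fun a ha => Finset.sum_congr rfl fun b hb => ?_
    have : ((2 * k : ℕ) : ℝ) + 2 ≠ 0 := by positivity
    rw [Nat.factorial_succ]
    push_cast at this ⊢
    field_simp
    ring

theorem haf_subm {M : ℕ} (A : Matrix (Fin M) (Fin M) ℝ) (S : Finset (Fin M)) :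
    haf (subm A S) = auxH A S := by
  have key : ∀ (n k : ℕ) (hn : n = 2 * k) (hS : S.card = n), 
      ∑ σ : Equiv.Perm (Fin n), ∏ j : Fin k,
        A (S.orderEmbOfFin hS (σ ⟨2 * j.1, by omega⟩))
          (S.orderEmbOfFin hS (σ ⟨2 * j.1 + 1, by omega⟩)) =
      ((k.factorial * 2 ^ k : ℕ) : ℝ) * auxE A n S := by
    intro n k hn hS
    subst hn
    rw [← sum_inj_aux]
    refine Finset.sum_bij (fun σ _ => fun i => S.orderEmbOfFin hS (σ i)) ?_ ?_ ?_ ?_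
    · intro σ _
      simp only [Finset.mem_filter, Finset.mem_univ, true_and]
      exact ⟨(S.orderEmbOfFin hS).injective.comp σ.injective,
        fun i => Finset.orderEmbOfFin_mem _ _ _⟩
    · intro σ _ τ _ h
      ext i
      have := congrFun h i
      rw [(S.orderEmbOfFin hS).injective this]
    · intro g hg
      simp only [Finset.mem_filter, Finset.mem_univ, true_and] at hg
      obtain ⟨hi, hm⟩ := hg
      have hinj : Function.Injective
          (fun i => (S.orderIsoOfFin hS).symm ⟨g i, hm i⟩) := by
        intro i j hij
        have := (S.orderIsoOfFin hS).symm.injective hij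
        exact hi (congrArg Subtype.val this)
      refine ⟨Equiv.ofBijective _ (Finite.injective_iff_bijective.mp hinj), Finset.mem_univ _, ?_⟩
      funext i
      simp only [Equiv.ofBijective_apply]
      rw [← Finset.coe_orderIsoOfFin_apply]
      simp
    · intro σ _
      rfl
  unfold haf auxH
  split_ifs with h
  · have hk := key S.card (S.card / 2) (by omega) rfl
    unfold subm
    rw [hk, ← mul_assoc, inv_mul_cancel₀, one_mul]
    positivity
  · obtain ⟨k, hk⟩ : ∃ k, S.card = 2 * k + 1 := ⟨S.card / 2, by omega⟩
    rw [hk, auxE_odd]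

theorem eval_muPlus {M : ℕ} (A : Matrix (Fin M) (Fin M) ℝ) (z : ℝ) :
    Polynomial.eval z (muPlus A) = ∑ S : Finset (Fin M), auxH A S * z ^ (M - S.card) := by
  simp [muPlus, Polynomial.eval_finsetSum, haf_subm]

theorem eval_muPlus_subm {M : ℕ} (A : Matrix (Fin M) (Fin M) ℝ) (S : Finset (Fin M)) (z : ℝ) :
    Polynomial.eval z (muPlus (subm A S)) =
      ∑ T ∈ S.powerset, auxH A T * z ^ (S.card - T.card) := by
  rw [eval_muPlus]
  have hS : Finset.univ.map (S.orderEmbOfFin rfl).toEmbedding = S := by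
    simp
  have h2 : S.powerset = (Finset.univ : Finset (Finset (Fin S.card))).map
      (Finset.mapEmbedding (S.orderEmbOfFin rfl).toEmbedding).toEmbedding := by
    ext T
    simp only [Finset.mem_powerset, Finset.mem_map, Finset.mem_univ, true_and]
    nth_rewrite 1 [← hS]
    rw [Finset.subset_map_iff]
    constructor
    · rintro ⟨u, _, rfl⟩
      exact ⟨u, rfl⟩
    · rintro ⟨u, rfl⟩
      exact ⟨u, Finset.subset_univ _, rfl⟩
  rw [h2, Finset.sum_map]
  refine Finset.sum_congr rfl fun T _ => ?_
  have := auxH_map A (S.orderEmbOfFin rfl).toEmbedding T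
  simp only [RelEmbedding.coe_toEmbedding, Finset.mapEmbedding_apply, Finset.card_map]
  rw [← this]
  rfl

/-- The prism weights on the disjoint sum. -/
noncomputable def prismW {V : Type*} [DecidableEq V] (A : Matrix V V ℝ) (x : ℝ) :
    Matrix (V ⊕ V) (V ⊕ V) ℝ :=
  Matrix.fromBlocks A (x • 1) (x • 1) A

/-- The explicit formula for the prism hafnian. -/
noncomputable def prismR {V : Type*} [DecidableEq V] (A : Matrix V V ℝ) (x : ℝ)
    (S T : Finset V) : ℝ :=
  ∑ U ∈ (S ∩ T).powerset, x ^ U.card * (auxH A (S \ U) * auxH A (T \ U))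

theorem prismR_comm {V : Type*} [DecidableEq V] (A : Matrix V V ℝ) (x : ℝ)
    (S T : Finset V) : prismR A x S T = prismR A x T S := by
  unfold prismR
  rw [Finset.inter_comm]
  exact Finset.sum_congr rfl fun U _ => by ring

theorem prismR_left {V : Type*} [DecidableEq V] (A : Matrix V V ℝ) (x : ℝ)
    (S T : Finset V) :
    ∑ U ∈ (S ∩ T).powerset, x ^ U.card * ((S \ U).card * auxH A (S \ U) * auxH A (T \ U)) =
    ∑ a ∈ S, ∑ b ∈ S.erase a, A a b * prismR A x ((S.erase a).erase b) T := by
  simp only [auxH_rec, prismR, Finset.mul_sum, Finset.sum_mul]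
  rw [Finset.sum_comm' (t' := S) (s' := fun a => ((S.erase a) ∩ T).powerset)]
  · refine Finset.sum_congr rfl fun a ha => ?_
    rw [Finset.sum_comm' (t' := S.erase a) (s' := fun b => (((S.erase a).erase b) ∩ T).powerset)]
    · refine Finset.sum_congr rfl fun b hb => Finset.sum_congr rfl fun U hU => ?_
      have : ((S \ U).erase a).erase b = ((S.erase a).erase b) \ U := by
        ext; simp; tauto
      rw [this]; ring
    · intro U b
      simp only [Finset.mem_powerset, Finset.subset_iff, Finset.mem_inter, Finset.mem_erase,
        Finset.mem_sdiff]
      grind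
  · intro U a
    simp only [Finset.mem_powerset, Finset.subset_iff, Finset.mem_inter, Finset.mem_erase,
        Finset.mem_sdiff]
    grind

theorem prismR_mid {V : Type*} [DecidableEq V] (A : Matrix V V ℝ) (x : ℝ)
    (S T : Finset V) :
    ∑ U ∈ (S ∩ T).powerset, x ^ U.card * (U.card * (auxH A (S \ U) * auxH A (T \ U))) =
    ∑ a ∈ S ∩ T, x * prismR A x (S.erase a) (T.erase a) := by
  have h1 : ∀ U ∈ (S ∩ T).powerset, 
      x ^ U.card * (U.card * (auxH A (S \ U) * auxH A (T \ U))) =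
      ∑ a ∈ U, x ^ U.card * (auxH A (S \ U) * auxH A (T \ U)) := by
    intro U _
    rw [Finset.sum_const, nsmul_eq_mul]; ring
  rw [Finset.sum_congr rfl h1, Finset.sum_comm' (t' := S ∩ T)
    (s' := fun a => (S ∩ T).powerset.filter (fun U => a ∈ U))]
  · refine Finset.sum_congr rfl fun a ha => ?_
    rw [prismR, Finset.mul_sum]
    refine Finset.sum_bij' (fun U _ => U.erase a) (fun U _ => insert a U) ?_ ?_ ?_ ?_ ?_
    · intro U hU
      simp only [Finset.mem_powerset, Finset.subset_iff, Finset.mem_inter, Finset.mem_erase,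
        Finset.mem_filter] at hU ⊢
      grind
    · intro U hU
      simp only [Finset.mem_powerset, Finset.subset_iff, Finset.mem_inter, Finset.mem_erase,
        Finset.mem_filter, Finset.mem_insert] at hU ha ⊢
      grind
    · intro U hU
      exact Finset.insert_erase (Finset.mem_filter.mp hU).2
    · intro U hU
      apply Finset.erase_insert
      intro h
      have := (Finset.mem_powerset.mp hU) h
      simp at this
    · intro U hU
      have haU := (Finset.mem_filter.mp hU).2
      have e1 : ∀ S : Finset V, S.erase a \ U.erase a = S \ U := by
        intro S; ext y; simp only [Finset.mem_sdiff, Finset.mem_erase]; grind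
      rw [e1, e1, ← Finset.card_erase_add_one haU, pow_succ]
      ring
  · intro U a
    simp only [Finset.mem_powerset, Finset.mem_filter]
    constructor
    · rintro ⟨h1, h2⟩
      exact ⟨⟨h1, h2⟩, h1 h2⟩
    · rintro ⟨h1, _⟩
      exact h1

theorem prismR_rec {V : Type*} [DecidableEq V] (A : Matrix V V ℝ) (x : ℝ)
    (S T : Finset V) :
    ((S.card : ℝ) + T.card) * prismR A x S T =
      (∑ a ∈ S, ∑ b ∈ S.erase a, A a b * prismR A x ((S.erase a).erase b) T) +
      (∑ a ∈ T, ∑ b ∈ T.erase a, A a b * prismR A x S ((T.erase a).erase b)) +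
      2 * ∑ a ∈ S ∩ T, x * prismR A x (S.erase a) (T.erase a) := by
  have hT := prismR_left A x T S
  simp only [prismR_comm A x _ S] at hT
  rw [← hT, ← prismR_left, ← prismR_mid, Finset.inter_comm T S, Finset.mul_sum, prismR,
    Finset.mul_sum, ← Finset.sum_add_distrib, ← Finset.sum_add_distrib]
  refine Finset.sum_congr rfl fun U hU => ?_
  have hU' := Finset.mem_powerset.mp hU
  have h1 := Finset.card_sdiff_add_card_eq_card (hU'.trans Finset.inter_subset_left)
  have h2 := Finset.card_sdiff_add_card_eq_card (hU'.trans Finset.inter_subset_right)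
  rw [← h1, ← h2]
  push_cast
  ring

theorem auxH_prism {V : Type*} [DecidableEq V] (A : Matrix V V ℝ) (x : ℝ)
    (S T : Finset V) : auxH (prismW A x) (S.disjSum T) = prismR A x S T := by
  have := auxH_unique (prismW A x) (fun R => prismR A x R.toLeft R.toRight)
    (by
      have h1 : (∅ : Finset (V ⊕ V)).toLeft = ∅ := by ext; simp
      have h2 : (∅ : Finset (V ⊕ V)).toRight = ∅ := by ext; simp
      simp only [h1, h2]
      simp [prismR, auxH_empty]) ?_ (S.disjSum T)
  · rw [← this]; simp
  · intro R
    obtain ⟨S, T, rfl⟩ : ∃ S T : Finset V, R = S.disjSum T :=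
      ⟨R.toLeft, R.toRight, by ext y; cases y <;> simp⟩
    have eL : ∀ (S T : Finset V) (a : V), (S.disjSum T).erase (Sum.inl a) =
        (S.erase a).disjSum T := by
      intro S T a; ext y; cases y <;> simp
    have eR : ∀ (S T : Finset V) (a : V), (S.disjSum T).erase (Sum.inr a) =
        S.disjSum (T.erase a) := by
      intro S T a; ext y; cases y <;> simp
    simp only [Finset.sum_disjSum, eL, eR, Finset.toLeft_disjSum, Finset.toRight_disjSum,
      Finset.card_disjSum, prismW, Matrix.fromBlocks_apply₁₁, Matrix.fromBlocks_apply₁₂,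
      Matrix.fromBlocks_apply₂₁, Matrix.fromBlocks_apply₂₂, Matrix.smul_apply, Matrix.one_apply,
      smul_eq_mul, mul_ite, mul_one, mul_zero, ite_mul, zero_mul, Finset.sum_ite_eq]
    push_cast
    rw [prismR_rec, Finset.sum_add_distrib, Finset.sum_add_distrib, ← Finset.sum_filter,
      ← Finset.sum_filter, Finset.filter_mem_eq_inter, Finset.filter_mem_eq_inter,
      Finset.inter_comm T S]
    ring

theorem dgbs_sum_aux {M : ℕ} (A : Matrix (Fin M) (Fin M) ℝ) (x z : ℝ) :
    ∑ S : Finset (Fin M), (∑ T ∈ S.powerset, auxH A T * z ^ (S.card - T.card)) ^ 2 *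
        x ^ (M - S.card) =
    ∑ S : Finset (Fin M), ∑ T : Finset (Fin M), prismR A x S T *
        z ^ (M + M - (S.card + T.card)) := by
  have hcard : ∀ S : Finset (Fin M), S.card ≤ M := fun S => by
    simpa using Finset.card_le_univ S
  -- common form: triples `(U, P, Q)` with `P, Q` disjoint from `U`
  have hL : ∑ S : Finset (Fin M), (∑ T ∈ S.powerset, auxH A T * z ^ (S.card - T.card)) ^ 2 *
        x ^ (M - S.card) =
      ∑ U : Finset (Fin M), ∑ P ∈ Uᶜ.powerset, ∑ Q ∈ Uᶜ.powerset,
        x ^ U.card * (auxH A P * auxH A Q) * z ^ (M + M - (P.card + U.card + (Q.card + U.card))) := by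
    rw [← (Equiv.ofBijective _ (compl_bijective (α := Finset (Fin M)))).sum_comp]
    refine Finset.sum_congr rfl fun U _ => ?_
    simp only [Equiv.ofBijective_apply]
    rw [sq, Finset.sum_mul_sum, Finset.sum_mul]
    refine Finset.sum_congr rfl fun P hP => ?_
    rw [Finset.sum_mul]
    refine Finset.sum_congr rfl fun Q hQ => ?_
    have hP' := Finset.card_le_card (Finset.mem_powerset.mp hP)
    have hQ' := Finset.card_le_card (Finset.mem_powerset.mp hQ)
    have hU := hcard U
    rw [Finset.card_compl, Fintype.card_fin] at *
    rw [show M - (M - U.card) = U.card by omega,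
      show M + M - (P.card + U.card + (Q.card + U.card)) =
        (M - U.card - P.card) + (M - U.card - Q.card) by omega, pow_add]
    ring
  have hR : ∑ S : Finset (Fin M), ∑ T : Finset (Fin M), prismR A x S T *
        z ^ (M + M - (S.card + T.card)) =
      ∑ U : Finset (Fin M), ∑ S ∈ Finset.univ.filter (fun S => U ⊆ S),
        ∑ T ∈ Finset.univ.filter (fun T => U ⊆ T),
        x ^ U.card * (auxH A (S \ U) * auxH A (T \ U)) * z ^ (M + M - (S.card + T.card)) := by
    simp only [prismR, Finset.sum_mul]
    have h1 : ∀ S : Finset (Fin M), (∑ T : Finset (Fin M), ∑ U ∈ (S ∩ T).powerset,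
        x ^ U.card * (auxH A (S \ U) * auxH A (T \ U)) * z ^ (M + M - (S.card + T.card))) =
        ∑ U ∈ S.powerset, ∑ T ∈ Finset.univ.filter (fun T => U ⊆ T),
        x ^ U.card * (auxH A (S \ U) * auxH A (T \ U)) * z ^ (M + M - (S.card + T.card)) := by
      intro S
      apply Finset.sum_comm'
      intro T U
      simp only [Finset.mem_univ, true_and, Finset.mem_powerset, Finset.mem_filter,
        Finset.subset_inter_iff]
      exact and_comm
    simp only [h1]
    apply Finset.sum_comm'
    intro S U
    simp
  rw [hL, hR]
  refine Finset.sum_congr rfl fun U _ => ?_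
  have hre : ∀ f : Finset (Fin M) → Finset (Fin M) → ℝ,
      ∑ P ∈ Uᶜ.powerset, f P (P ∪ U) =
      ∑ S ∈ Finset.univ.filter (fun S => U ⊆ S), f (S \ U) S := by
    intro f
    have hd : ∀ P ∈ Uᶜ.powerset, (P ∪ U) \ U = P := by
      intro P hP
      have := Finset.mem_powerset.mp hP
      rw [Finset.union_sdiff_right]
      exact Finset.sdiff_eq_self_of_disjoint (by
        rw [Finset.disjoint_left]; intro y hy hyU
        exact (Finset.mem_compl.mp (this hy)) hyU)
    refine Finset.sum_bij' (fun P _ => P ∪ U) (fun S _ => S \ U) ?_ ?_ ?_ ?_ ?_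
    · intro P _; simp
    · intro S _
      rw [Finset.mem_powerset]
      intro y hy
      simp at hy ⊢
      exact hy.2
    · exact hd
    · intro S hS
      exact Finset.sdiff_union_of_subset (Finset.mem_filter.mp hS).2
    · intro P hP
      simp only [hd P hP]
  have hc : ∀ P ∈ Uᶜ.powerset, P.card + U.card = (P ∪ U).card := by
    intro P hP
    have := Finset.mem_powerset.mp hP
    rw [Finset.card_union_of_disjoint]
    rw [Finset.disjoint_left]; intro y hy hyU
    exact (Finset.mem_compl.mp (this hy)) hyU
  have h3 : ∀ P ∈ Uᶜ.powerset, (∑ Q ∈ Uᶜ.powerset,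
      x ^ U.card * (auxH A P * auxH A Q) * z ^ (M + M - (P.card + U.card + (Q.card + U.card)))) =
      ∑ T ∈ Finset.univ.filter (fun T => U ⊆ T),
        x ^ U.card * (auxH A P * auxH A (T \ U)) * z ^ (M + M - ((P ∪ U).card + T.card)) := by
    intro P hP
    rw [← hre (fun Q T => x ^ U.card * (auxH A P * auxH A Q) *
      z ^ (M + M - ((P ∪ U).card + T.card)))]
    refine Finset.sum_congr rfl fun Q hQ => ?_
    rw [hc P hP, hc Q hQ]
  rw [Finset.sum_congr rfl h3]
  exact hre (fun P S => ∑ T ∈ Finset.univ.filter (fun T => U ⊆ T),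
        x ^ U.card * (auxH A P * auxH A (T \ U)) * z ^ (M + M - (S.card + T.card)))

theorem eval_muPlus_prism {M : ℕ} (A : Matrix (Fin M) (Fin M) ℝ) (x z : ℝ) :
    Polynomial.eval z (muPlus (prism A x)) =
    ∑ S : Finset (Fin M), ∑ T : Finset (Fin M), prismR A x S T *
        z ^ (M + M - (S.card + T.card)) := by
  rw [eval_muPlus]
  have hp : prism A x = (prismW A x).submatrix (finSumFinEquiv (m := M) (n := M)).symm
      finSumFinEquiv.symm := rfl
  rw [hp, ← Fintype.sum_prod_type']
  symm
  refine Finset.sum_bij' (fun p _ => (p.1.disjSum p.2).map finSumFinEquiv.toEmbedding)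
    (fun R _ => ((R.map finSumFinEquiv.symm.toEmbedding).toLeft,
      (R.map finSumFinEquiv.symm.toEmbedding).toRight)) ?_ ?_ ?_ ?_ ?_
  · simp
  · simp
  · intro p _
    simp [Finset.map_map]
  · intro R _
    ext y
    simp only [Finset.mem_map_equiv]
    rcases h : finSumFinEquiv.symm y with a | a <;>
      have h' := (Equiv.symm_apply_eq _).mp h <;>
      simp only [Finset.inl_mem_disjSum, Finset.inr_mem_disjSum, Finset.mem_toLeft,
        Finset.mem_toRight, Finset.mem_map_equiv, Equiv.symm_symm, ← h']
  · intro p _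
    have := auxH_map (prismW A x) (finSumFinEquiv (m := M) (n := M)).symm.toEmbedding
      ((p.1.disjSum p.2).map finSumFinEquiv.toEmbedding)
    simp only [Equiv.coe_toEmbedding] at this
    rw [this, Finset.map_map, Finset.card_map, Finset.card_disjSum, ← auxH_prism]
    simp

/-- Duality: the signless displaced GBS polynomial of `G` equals the signless matching
polynomial of the prism `G □ P₂(x)`. -/
theorem dgbs_duality {M : ℕ} (G : SimpleGraph (Fin M)) [DecidableRel G.Adj]
    (x z : ℝ) :
    ∑ S : Finset (Fin M),
        (Polynomial.eval z (muPlus (subm (G.adjMatrix ℝ) S))) ^ 2 * x ^ (M - S.card) =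
      Polynomial.eval z (muPlus (prism (G.adjMatrix ℝ) x)) := by
  simp only [eval_muPlus_subm]
  rw [dgbs_sum_aux, eval_muPlus_prism]
end

section
/- For the book graph B_n (n quadrilaterals sharing a common edge), the GBS polynomial is GBS_{B_n}(x) = (x² − 1)^{n−1} (x² − n − 1)². -/
open Finset Polynomial

/-- The adjacency matrix of the book graph `B_n`: vertices `0 = u`, `1 = v`,
`a_i = 2 + i` and `b_i = 2 + n + i` for `0 ≤ i < n`, with edges `(u,v)`, `(u,a_i)`,
`(v,b_i)` and `(a_i,b_i)`. -/
def bookAdj (n : ℕ) : Matrix (Fin (2 * n + 2)) (Fin (2 * n + 2)) ℝ := fun i j =>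
  if ((i.1 = 0 ∧ j.1 = 1) ∨ (i.1 = 0 ∧ 2 ≤ j.1 ∧ j.1 < 2 + n) ∨
        (i.1 = 1 ∧ 2 + n ≤ j.1 ∧ j.1 < 2 + 2 * n) ∨
        (2 ≤ i.1 ∧ i.1 < 2 + n ∧ j.1 = i.1 + n)) ∨
      ((j.1 = 0 ∧ i.1 = 1) ∨ (j.1 = 0 ∧ 2 ≤ i.1 ∧ i.1 < 2 + n) ∨
        (j.1 = 1 ∧ 2 + n ≤ i.1 ∧ i.1 < 2 + 2 * n) ∨
        (2 ≤ j.1 ∧ j.1 < 2 + n ∧ i.1 = j.1 + n))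
  then 1 else 0

/-! ### Hafnians through pair removal -/

/-- Normalised pair-removal recursion. -/
noncomputable def hafRec {V : Type*} [DecidableEq V] (A : V → V → ℝ) : ℕ → Finset V → ℝ
  | 0, _ => 1
  | m + 1, S => (2 * ((m : ℝ) + 1))⁻¹ *
      ∑ p ∈ S, ∑ q ∈ S.erase p, A p q * hafRec A m ((S.erase p).erase q)

lemma sum_erase_comm {V : Type*} [DecidableEq V] (T : Finset V) (f : V → V → ℝ) :
    ∑ p ∈ T, ∑ q ∈ T.erase p, f p q = ∑ q ∈ T, ∑ p ∈ T.erase q, f p q := by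
  apply Finset.sum_comm'
  intro x y
  simp only [Finset.mem_erase]
  tauto

lemma hafRec_sum {V : Type*} [DecidableEq V] (A : V → V → ℝ) (m : ℕ) (S : Finset V) :
    ∑ p ∈ S, ∑ q ∈ S.erase p, A p q * hafRec A m ((S.erase p).erase q) =
      (2 * ((m : ℝ) + 1)) * hafRec A (m + 1) S := by
  have : (2 * ((m : ℝ) + 1)) ≠ 0 := by positivity
  rw [hafRec, mul_inv_cancel_left₀ this]

lemma hafRec_expand {V : Type*} [DecidableEq V] (A : V → V → ℝ) (hA : ∀ x y, A x y = A y x)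
    (m : ℕ) : ∀ (S : Finset V), S.card = 2 * (m + 1) → ∀ i ∈ S,
    hafRec A (m + 1) S = ∑ q ∈ S.erase i, A i q * hafRec A m ((S.erase i).erase q) := by
  induction m with
  | zero =>
    intro S hS i hi
    obtain ⟨x, y, hxy, rfl⟩ := Finset.card_eq_two.mp hS
    have h1 : ({x, y} : Finset V).erase x = {y} := by
      ext z; simp only [mem_erase, mem_insert, mem_singleton]; grind
    have h2 : ({x, y} : Finset V).erase y = {x} := by
      ext z; simp only [mem_erase, mem_insert, mem_singleton]; grind
    simp only [mem_insert, mem_singleton] at hi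
    rcases hi with rfl | rfl
    · simp [hafRec, Finset.sum_pair hxy, h1, h2, hA y i]; ring
    · simp [hafRec, Finset.sum_pair hxy, h1, h2, hA x i]; ring
  | succ m ih =>
    intro S hS i hi
    have hne : (2 * (((m + 1 : ℕ) : ℝ) + 1)) ≠ 0 := by positivity
    apply mul_left_cancel₀ hne
    rw [← hafRec_sum, ← Finset.add_sum_erase S _ hi]
    have hsplit : ∀ p ∈ S.erase i,
        ∑ q ∈ S.erase p, A p q * hafRec A (m + 1) ((S.erase p).erase q) =
        A i p * hafRec A (m + 1) ((S.erase i).erase p) +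
          ∑ q ∈ (S.erase i).erase p, ∑ k ∈ ((S.erase i).erase p).erase q,
            A p q * (A i k * hafRec A m ((((S.erase i).erase p).erase q).erase k)) := by
      intro p hp
      have hp' := Finset.mem_erase.mp hp
      have hip : i ∈ S.erase p := Finset.mem_erase.mpr ⟨hp'.1.symm, hi⟩
      rw [← Finset.add_sum_erase (S.erase p) _ hip, hA p i, Finset.erase_right_comm (a := p) (b := i)]
      congr 1
      apply Finset.sum_congr rfl
      intro q hq
      have hq' := Finset.mem_erase.mp hq
      have hq'' := Finset.mem_erase.mp hq'.2
      have hqp : q ∈ S.erase p := Finset.mem_erase.mpr ⟨hq'.1, hq''.2⟩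
      have hiq : i ∈ (S.erase p).erase q := Finset.mem_erase.mpr ⟨hq''.1.symm, hip⟩
      have hcard : ((S.erase p).erase q).card = 2 * (m + 1) := by
        rw [Finset.card_erase_of_mem hqp, Finset.card_erase_of_mem hp'.2, hS]; omega
      rw [ih _ hcard i hiq, Finset.mul_sum, Finset.erase_right_comm (a := q) (b := i),
        Finset.erase_right_comm (a := p) (b := i)]
    rw [Finset.sum_congr rfl hsplit, Finset.sum_add_distrib]
    have h3 : ∑ p ∈ S.erase i, ∑ q ∈ (S.erase i).erase p, ∑ k ∈ ((S.erase i).erase p).erase q,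
            A p q * (A i k * hafRec A m ((((S.erase i).erase p).erase q).erase k)) =
          ∑ k ∈ S.erase i, A i k * ((2 * ((m : ℝ) + 1)) *
            hafRec A (m + 1) ((S.erase i).erase k)) := by
      have h4 : ∀ p ∈ S.erase i, 
          ∑ q ∈ (S.erase i).erase p, ∑ k ∈ ((S.erase i).erase p).erase q,
            A p q * (A i k * hafRec A m ((((S.erase i).erase p).erase q).erase k)) =
          ∑ k ∈ (S.erase i).erase p, ∑ q ∈ ((S.erase i).erase p).erase k,
            A p q * (A i k * hafRec A m ((((S.erase i).erase p).erase q).erase k)) :=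
        fun p _ => sum_erase_comm ((S.erase i).erase p) (fun q k =>
          A p q * (A i k * hafRec A m ((((S.erase i).erase p).erase q).erase k)))
      rw [Finset.sum_congr rfl h4, sum_erase_comm (S.erase i)]
      apply Finset.sum_congr rfl
      intro k _
      rw [← hafRec_sum, Finset.mul_sum]
      apply Finset.sum_congr rfl
      intro p _
      rw [Finset.mul_sum, Finset.erase_right_comm (a := p) (b := k)]
      apply Finset.sum_congr rfl
      intro q _
      rw [Finset.erase_right_comm (a := q) (b := k), Finset.erase_right_comm (a := p) (b := k)]
      ring
    rw [h3, Finset.mul_sum, ← Finset.sum_add_distrib, ← Finset.sum_add_distrib]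
    apply Finset.sum_congr rfl
    intro k _
    push_cast
    ring

lemma hafRec_map {V W : Type*} [DecidableEq V] [DecidableEq W] (e : V ≃ W) (A : W → W → ℝ)
    (m : ℕ) : ∀ S : Finset V, hafRec A m (S.map e.toEmbedding) =
      hafRec (fun x y => A (e x) (e y)) m S := by
  induction m with
  | zero => intro S; rfl
  | succ m ih =>
    intro S
    have he : ∀ (T : Finset V) (p : V),
        (T.map e.toEmbedding).erase (e p) = (T.erase p).map e.toEmbedding := by
      intro T p
      rw [Finset.map_erase]; rfl
    simp only [hafRec, Finset.sum_map, Equiv.coe_toEmbedding, he, ih]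

/-- Sum of `φ` over injective sequences in `S`. -/
noncomputable def injSum {V : Type*} [Fintype V] [DecidableEq V] (n : ℕ) (S : Finset V)
    (φ : (Fin n → V) → ℝ) : ℝ :=
  ∑ f : Fin n → V, if Function.Injective f ∧ ∀ i, f i ∈ S then φ f else 0

lemma injSum_succ {V : Type*} [Fintype V] [DecidableEq V] (n : ℕ) (S : Finset V)
    (φ : (Fin (n + 1) → V) → ℝ) :
    injSum (n + 1) S φ = ∑ p ∈ S, injSum n (S.erase p) (fun g => φ (Fin.cons p g)) := by
  unfold injSum
  rw [← (Fin.consEquiv (fun _ : Fin (n + 1) => V)).sum_comp, Fintype.sum_prod_type,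
    ← Finset.sum_filter_add_sum_filter_not Finset.univ (fun p => p ∈ S)]
  have h0 : ∀ p ∈ Finset.univ.filter (fun p => ¬ p ∈ S), ∑ g : Fin n → V,
      (if Function.Injective (Fin.consEquiv (fun _ : Fin (n + 1) => V) (p, g)) ∧
        ∀ i, (Fin.consEquiv (fun _ : Fin (n + 1) => V) (p, g)) i ∈ S then
        φ (Fin.consEquiv (fun _ : Fin (n + 1) => V) (p, g)) else 0) = 0 := by
    intro p hp
    apply Finset.sum_eq_zero
    intro g _
    rw [if_neg]
    rintro ⟨_, h⟩
    exact (Finset.mem_filter.mp hp).2 (h 0)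
  rw [Finset.sum_eq_zero h0, add_zero]
  have hf : Finset.univ.filter (fun p => p ∈ S) = S := by ext; simp
  rw [hf]
  apply Finset.sum_congr rfl
  intro p hp
  apply Finset.sum_congr rfl
  intro g _
  have hc : (Fin.consEquiv (fun _ : Fin (n + 1) => V)) (p, g) = Fin.cons p g := rfl
  rw [hc]
  have : (Function.Injective (Fin.cons p g : Fin (n + 1) → V) ∧
      ∀ i, (Fin.cons p g : Fin (n + 1) → V) i ∈ S) ↔
      (Function.Injective g ∧ ∀ i, g i ∈ S.erase p) := by
    rw [Fin.cons_injective_iff, Fin.forall_fin_succ]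
    simp only [Fin.cons_zero, Fin.cons_succ, Finset.mem_erase, Set.mem_range, not_exists]
    constructor
    · rintro ⟨⟨h1, h2⟩, h3, h4⟩
      exact ⟨h2, fun i => ⟨h1 i, h4 i⟩⟩
    · rintro ⟨h1, h2⟩
      exact ⟨⟨fun i => (h2 i).1, h1⟩, hp, fun i => (h2 i).2⟩
  simp only [this]

/-- The product of matrix entries along consecutive pairs. -/
noncomputable def pairProd {V : Type*} (A : V → V → ℝ) (n : ℕ) (f : Fin n → V) : ℝ :=
  ∏ j ∈ Finset.range (n / 2), if h : 2 * j + 1 < n then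
    A (f ⟨2 * j, by omega⟩) (f ⟨2 * j + 1, h⟩) else 1

lemma pairProd_cons {V : Type*} (A : V → V → ℝ) (n : ℕ) (p q : V) (f : Fin n → V) :
    pairProd A (n + 2) (Fin.cons p (Fin.cons q f : Fin (n + 1) → V)) =
      A p q * pairProd A n f := by
  unfold pairProd
  have : (n + 2) / 2 = n / 2 + 1 := by omega
  rw [this, Finset.prod_range_succ', mul_comm]
  congr 1
  apply Finset.prod_congr rfl
  intro j _
  by_cases h : 2 * j + 1 < n
  · have h' : 2 * (j + 1) + 1 < n + 2 := by omega
    rw [dif_pos h, dif_pos h']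
    rfl
  · have h' : ¬ 2 * (j + 1) + 1 < n + 2 := by omega
    rw [dif_neg h, dif_neg h']

lemma injSum_mul {V : Type*} [Fintype V] [DecidableEq V] (n : ℕ) (S : Finset V) (c : ℝ)
    (φ : (Fin n → V) → ℝ) : injSum n S (fun f => c * φ f) = c * injSum n S φ := by
  unfold injSum
  rw [Finset.mul_sum]
  apply Finset.sum_congr rfl
  intro f _
  split_ifs <;> simp

lemma injSum_pairProd {V : Type*} [Fintype V] [DecidableEq V] (A : V → V → ℝ) (m : ℕ) :
    ∀ S : Finset V, injSum (2 * m) S (pairProd A (2 * m)) =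
      ((m.factorial * 2 ^ m : ℕ) : ℝ) * hafRec A m S := by
  induction m with
  | zero =>
    intro S
    have : Function.Injective (fun i : Fin 0 => (i.elim0 : V)) := fun i => i.elim0
    simp [injSum, pairProd, hafRec, Function.injective_of_subsingleton]
  | succ m ih =>
    intro S
    have h2 : 2 * (m + 1) = 2 * m + 1 + 1 := by ring
    rw [h2, injSum_succ]
    simp only [injSum_succ, pairProd_cons, injSum_mul, ih]
    have h3 : ∀ p q (T : Finset V), A p q * (((m.factorial * 2 ^ m : ℕ) : ℝ) * hafRec A m T) =
      ((m.factorial * 2 ^ m : ℕ) : ℝ) * (A p q * hafRec A m T) := by intros; ring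
    simp only [h3, ← Finset.mul_sum]
    rw [hafRec_sum, Nat.factorial_succ]
    push_cast
    ring

lemma perm_sum_eq_injSum {M : ℕ} (S : Finset (Fin M)) (φ : (Fin S.card → Fin M) → ℝ) :
    ∑ σ : Equiv.Perm (Fin S.card), φ (fun i => S.orderEmbOfFin rfl (σ i)) =
      injSum S.card S φ := by
  unfold injSum
  rw [← Finset.sum_filter]
  refine Finset.sum_bij (fun σ _ => fun i => S.orderEmbOfFin rfl (σ i)) ?_ ?_ ?_ ?_
  · intro σ _
    simp only [Finset.mem_filter, Finset.mem_univ, true_and]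
    exact ⟨(S.orderEmbOfFin rfl).injective.comp σ.injective,
      fun i => Finset.orderEmbOfFin_mem S rfl _⟩
  · intro σ _ τ _ h
    ext i : 1
    exact (S.orderEmbOfFin rfl).injective (congrFun h i)
  · intro f hf
    simp only [Finset.mem_filter, Finset.mem_univ, true_and] at hf
    obtain ⟨hinj, hmem⟩ := hf
    have hg : Function.Injective
        (fun i => (S.orderIsoOfFin rfl).symm ⟨f i, hmem i⟩) := by
      intro i j hij
      have := (S.orderIsoOfFin rfl).symm.injective hij
      exact hinj (congrArg Subtype.val this)
    refine ⟨Equiv.ofBijective _ (Finite.injective_iff_bijective.mp hg), Finset.mem_univ _, ?_⟩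
    funext i
    rw [Equiv.ofBijective_apply, ← Finset.coe_orderIsoOfFin_apply, OrderIso.apply_symm_apply]
  · intro σ _
    rfl

lemma haf_subm_even {M : ℕ} (A : Matrix (Fin M) (Fin M) ℝ) (S : Finset (Fin M)) (m : ℕ)
    (hS : S.card = 2 * m) : haf (subm A S) = hafRec A m S := by
  have hd : 2 ∣ S.card := ⟨m, hS⟩
  have hm : S.card / 2 = m := by omega
  have h1 : haf (subm A S) = (((S.card / 2).factorial * 2 ^ (S.card / 2) : ℕ) : ℝ)⁻¹ *
      ∑ σ : Equiv.Perm (Fin S.card), pairProd A S.card (fun i => S.orderEmbOfFin rfl (σ i)) := by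
    unfold haf
    rw [dif_pos hd]
    congr 1
    apply Finset.sum_congr rfl
    intro σ _
    unfold pairProd
    rw [Finset.prod_range]
    apply Finset.prod_congr rfl
    intro j _
    have hj : 2 * j.1 + 1 < S.card := by have := j.2; omega
    rw [dif_pos hj]
    rfl
  rw [h1, perm_sum_eq_injSum, hm]
  have h2 : ∀ n, n = 2 * m → injSum n S (pairProd A n) =
      ((m.factorial * 2 ^ m : ℕ) : ℝ) * hafRec A m S := by
    rintro n rfl
    exact injSum_pairProd A m S
  rw [h2 _ hS, inv_mul_cancel_left₀]
  have := Nat.factorial_pos m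
  positivity

lemma haf_subm_odd {M : ℕ} (A : Matrix (Fin M) (Fin M) ℝ) (S : Finset (Fin M))
    (hS : ¬ 2 ∣ S.card) : haf (subm A S) = 0 := by
  unfold haf
  rw [dif_neg hS]

/-- Hafnian of the principal submatrix indexed by `S`, for an arbitrary index type. -/
noncomputable def hafOn {V : Type*} [DecidableEq V] (A : V → V → ℝ) (S : Finset V) : ℝ :=
  if 2 ∣ S.card then hafRec A (S.card / 2) S else 0

lemma haf_subm_map {V : Type*} [DecidableEq V] {M : ℕ} (e : V ≃ Fin M)
    (A : Matrix (Fin M) (Fin M) ℝ) (S : Finset V) :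
    haf (subm A (S.map e.toEmbedding)) = hafOn (fun x y => A (e x) (e y)) S := by
  unfold hafOn
  split_ifs with h
  · rw [haf_subm_even A _ (S.card / 2) (by rw [Finset.card_map]; omega)]
    exact hafRec_map e A _ S
  · exact haf_subm_odd A _ (by rwa [Finset.card_map])

lemma hafOn_empty {V : Type*} [DecidableEq V] (A : V → V → ℝ) : hafOn A ∅ = 1 := by
  simp [hafOn, hafRec]

lemma hafOn_expand {V : Type*} [DecidableEq V] (A : V → V → ℝ) (hA : ∀ x y, A x y = A y x)
    (S : Finset V) (i : V) (hi : i ∈ S) :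
    hafOn A S = ∑ q ∈ S.erase i, A i q * hafOn A ((S.erase i).erase q) := by
  have hpos : 0 < S.card := Finset.card_pos.mpr ⟨i, hi⟩
  have hc : ∀ q ∈ S.erase i, ((S.erase i).erase q).card + 2 = S.card := by
    intro q hq
    have h1 := Finset.card_erase_add_one hi
    have h2 := Finset.card_erase_add_one hq
    omega
  by_cases h : 2 ∣ S.card
  · obtain ⟨m, hm⟩ : ∃ m, S.card = 2 * (m + 1) := ⟨S.card / 2 - 1, by omega⟩
    have h1 : hafOn A S = hafRec A (m + 1) S := by
      unfold hafOn
      rw [if_pos h, hm]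
      congr 1
      omega
    rw [h1, hafRec_expand A hA m S hm i hi]
    apply Finset.sum_congr rfl
    intro q hq
    have := hc q hq
    unfold hafOn
    rw [if_pos (by omega), show ((S.erase i).erase q).card / 2 = m by omega]
  · rw [hafOn, if_neg h, eq_comm]
    apply Finset.sum_eq_zero
    intro q hq
    have := hc q hq
    unfold hafOn
    rw [if_neg (by omega), mul_zero]

/-! ### The book graph -/

/-- Vertices of the book graph: `inl false = u`, `inl true = v`, then the `a_i`, `b_i`. -/
abbrev BV (n : ℕ) : Type := Bool ⊕ (Fin n ⊕ Fin n)

/-- Adjacency of the book graph on `BV n`. -/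
def bookG (n : ℕ) : BV n → BV n → ℝ
  | .inl a, .inl b => if a ≠ b then 1 else 0
  | .inl a, .inr (.inl _) => if a = false then 1 else 0
  | .inl a, .inr (.inr _) => if a = true then 1 else 0
  | .inr (.inl _), .inl a => if a = false then 1 else 0
  | .inr (.inr _), .inl a => if a = true then 1 else 0
  | .inr (.inl i), .inr (.inr j) => if i = j then 1 else 0
  | .inr (.inr i), .inr (.inl j) => if i = j then 1 else 0
  | .inr (.inl _), .inr (.inl _) => 0
  | .inr (.inr _), .inr (.inr _) => 0

lemma bookG_symm (n : ℕ) (x y : BV n) : bookG n x y = bookG n y x := by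
  rcases x with a | i | i <;> rcases y with b | j | j <;> simp [bookG, eq_comm]

/-- Numbering of the vertices. -/
def bookFun (n : ℕ) : BV n → Fin (2 * n + 2)
  | .inl false => ⟨0, by omega⟩
  | .inl true => ⟨1, by omega⟩
  | .inr (.inl i) => ⟨2 + i.1, by omega⟩
  | .inr (.inr i) => ⟨2 + n + i.1, by omega⟩

lemma bookFun_inj (n : ℕ) : Function.Injective (bookFun n) := by
  intro x y h
  rcases x with (_ | _) | i | i <;> rcases y with (_ | _) | j | j <;>
    simp only [bookFun, Fin.mk.injEq] at h <;>
    first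
      | rfl
      | (exfalso; omega)
      | (have h' : i = j := by ext; omega
         rw [h'])

/-- The numbering as an equivalence. -/
noncomputable def bookEquiv (n : ℕ) : BV n ≃ Fin (2 * n + 2) :=
  Equiv.ofBijective (bookFun n) ((Fintype.bijective_iff_injective_and_card _).mpr
    ⟨bookFun_inj n, by simp; ring⟩)

lemma bookAdj_equiv (n : ℕ) (x y : BV n) :
    bookAdj n (bookEquiv n x) (bookEquiv n y) = bookG n x y := by
  simp only [bookEquiv, Equiv.ofBijective_apply]
  rcases x with (_ | _) | i | i <;> rcases y with (_ | _) | j | j <;>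
    simp only [bookFun, bookAdj, bookG, Fin.ext_iff] <;>
    congr 1 <;> simp <;> omega

/-- The vertex subset with spine part `W`, `a`-part `A` and `b`-part `B`. -/
def SS {n : ℕ} (W : Finset Bool) (A B : Finset (Fin n)) : Finset (BV n) :=
  W.disjSum (A.disjSum B)

lemma SS_erase_w {n : ℕ} (W : Finset Bool) (A B : Finset (Fin n)) (w : Bool) :
    (SS W A B).erase (.inl w) = SS (W.erase w) A B := by
  ext x; rcases x with a | i | i <;> simp [SS]

lemma SS_erase_a {n : ℕ} (W : Finset Bool) (A B : Finset (Fin n)) (i : Fin n) :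
    (SS W A B).erase (.inr (.inl i)) = SS W (A.erase i) B := by
  ext x; rcases x with a | i | i <;> simp [SS]

lemma SS_erase_b {n : ℕ} (W : Finset Bool) (A B : Finset (Fin n)) (i : Fin n) :
    (SS W A B).erase (.inr (.inr i)) = SS W A (B.erase i) := by
  ext x; rcases x with a | i | i <;> simp [SS]

lemma SS_sum {n : ℕ} (W : Finset Bool) (A B : Finset (Fin n)) (f : BV n → ℝ) :
    ∑ x ∈ SS W A B, f x = ∑ w ∈ W, f (.inl w) +
      (∑ a ∈ A, f (.inr (.inl a)) + ∑ b ∈ B, f (.inr (.inr b))) := by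
  simp [SS, Finset.sum_disjSum]

/-- The hafnian on the subset `SS W A B` of the book graph. -/
noncomputable def hb {n : ℕ} (W : Finset Bool) (A B : Finset (Fin n)) : ℝ :=
  hafOn (bookG n) (SS W A B)

lemma hb_expand_w {n : ℕ} (W : Finset Bool) (A B : Finset (Fin n)) (w : Bool) (hw : w ∈ W) :
    hb W A B = ∑ x ∈ W.erase w, bookG n (.inl w) (.inl x) * hb ((W.erase w).erase x) A B +
      (∑ a ∈ A, (if w = false then 1 else 0) * hb (W.erase w) (A.erase a) B +
       ∑ b ∈ B, (if w = true then 1 else 0) * hb (W.erase w) A (B.erase b)) := by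
  unfold hb
  rw [hafOn_expand _ (bookG_symm n) _ (.inl w) (by simp [SS, hw]), SS_erase_w, SS_sum]
  simp only [SS_erase_w, SS_erase_a, SS_erase_b, bookG]

lemma hb_empty {n : ℕ} (A : Finset (Fin n)) :
    ∀ B : Finset (Fin n), hb ∅ A B = if A = B then 1 else 0 := by
  induction A using Finset.induction_on with
  | empty =>
    intro B
    rcases B.eq_empty_or_nonempty with rfl | ⟨b, hb'⟩
    · have : SS (∅ : Finset Bool) (∅ : Finset (Fin n)) ∅ = ∅ := by
        ext x; rcases x with a | i | i <;> simp [SS]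
      simp [hb, this, hafOn_empty]
    · have hne : (∅ : Finset (Fin n)) ≠ B := by rintro rfl; simp at hb'
      rw [if_neg hne]
      unfold hb
      rw [hafOn_expand _ (bookG_symm n) _ (.inr (.inr b)) (by simp [SS, hb']), SS_erase_b, SS_sum]
      simp [bookG]
  | insert a A ha ih =>
    intro B
    unfold hb at ih ⊢
    rw [hafOn_expand _ (bookG_symm n) _ (.inr (.inl a)) (by simp [SS]), SS_erase_a, SS_sum,
      Finset.erase_insert ha]
    simp only [SS_erase_b, ih, bookG]
    simp only [Finset.sum_empty, zero_mul, Finset.sum_const_zero, zero_add, ite_mul, one_mul,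
      Finset.sum_ite_eq]
    by_cases hB : a ∈ B
    · rw [if_pos hB]
      congr 1
      apply propext
      constructor
      · rintro rfl; exact Finset.insert_erase hB
      · rintro rfl; exact (Finset.erase_insert ha).symm
    · rw [if_neg hB, if_neg]
      rintro rfl
      simp at hB

lemma hb_u {n : ℕ} (A B : Finset (Fin n)) :
    hb {false} A B = ∑ a ∈ A, if A.erase a = B then 1 else 0 := by
  rw [hb_expand_w _ _ _ false (by simp)]
  simp [hb_empty]

lemma hb_v {n : ℕ} (A B : Finset (Fin n)) :
    hb {true} A B = ∑ b ∈ B, if A = B.erase b then 1 else 0 := by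
  rw [hb_expand_w _ _ _ true (by simp)]
  simp [hb_empty]

lemma hb_uv {n : ℕ} (A B : Finset (Fin n)) :
    hb {false, true} A B = (if A = B then 1 else 0) +
      ∑ a ∈ A, ∑ b ∈ B, if A.erase a = B.erase b then 1 else 0 := by
  rw [hb_expand_w _ _ _ false (by simp)]
  have h1 : ({false, true} : Finset Bool).erase false = {true} := by decide
  simp [h1, hb_empty, hb_v, bookG]

/-! ### Summing over subsets -/

lemma sq_sum_unique {ι : Type*} [DecidableEq ι] (s : Finset ι) (P : ι → Prop) [DecidablePred P]
    (h : ∀ a ∈ s, ∀ b ∈ s, P a → P b → a = b) :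
    (∑ a ∈ s, if P a then (1 : ℝ) else 0) ^ 2 = ∑ a ∈ s, if P a then (1 : ℝ) else 0 := by
  have hc : (s.filter P).card ≤ 1 := by
    rw [Finset.card_le_one]
    intro a ha b hb'
    rw [Finset.mem_filter] at ha hb'
    exact h a ha.1 b hb'.1 ha.2 hb'.2
  rw [Finset.sum_boole]
  interval_cases hk : (s.filter P).card <;> simp

lemma hb_u_sq {n : ℕ} (A B : Finset (Fin n)) :
    hb {false} A B ^ 2 = ∑ a ∈ A, if A.erase a = B then 1 else 0 := by
  rw [hb_u]
  apply sq_sum_unique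
  intro a ha b hb' h1 h2
  exact Finset.erase_injOn A ha hb' (h1.trans h2.symm)

lemma hb_v_sq {n : ℕ} (A B : Finset (Fin n)) :
    hb {true} A B ^ 2 = ∑ b ∈ B, if A = B.erase b then 1 else 0 := by
  rw [hb_v]
  apply sq_sum_unique
  intro a ha b hb' h1 h2
  exact Finset.erase_injOn B ha hb' (h1.symm.trans h2)

lemma hb_uv_sq {n : ℕ} (A B : Finset (Fin n)) :
    hb {false, true} A B ^ 2 = (if A = B then (1 + (A.card : ℝ)) ^ 2 else 0) +
      ∑ a ∈ A, ∑ b ∈ Aᶜ, if insert b (A.erase a) = B then 1 else 0 := by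
  rw [hb_uv]
  by_cases hAB : A = B
  · subst hAB
    have h1 : ∑ a ∈ A, ∑ b ∈ A, (if A.erase a = A.erase b then (1 : ℝ) else 0) = A.card := by
      have : ∀ a ∈ A, ∑ b ∈ A, (if A.erase a = A.erase b then (1 : ℝ) else 0) = 1 := by
        intro a ha
        rw [Finset.sum_eq_single_of_mem a ha]
        · simp
        · intro b hb' hne
          rw [if_neg]
          intro h
          exact hne (Finset.erase_injOn A hb' ha h.symm)
      rw [Finset.sum_congr rfl this]
      simp
    have h2 : ∑ a ∈ A, ∑ b ∈ Aᶜ, (if insert b (A.erase a) = A then (1 : ℝ) else 0) = 0 := by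
      apply Finset.sum_eq_zero
      intro a _
      apply Finset.sum_eq_zero
      intro b hb'
      rw [if_neg]
      intro h
      rw [Finset.mem_compl] at hb'
      apply hb'
      rw [← h]
      simp
    rw [h1, h2]
    simp
  · rw [if_neg hAB, if_neg hAB, zero_add, zero_add, ← Finset.sum_product',
      sq_sum_unique (A ×ˢ B) (fun x => A.erase x.1 = B.erase x.2), Finset.sum_product]
    · apply Finset.sum_congr rfl
      intro a ha
      rw [Finset.sum_boole, Finset.sum_boole]
      congr 2
      ext b
      simp only [Finset.mem_filter, Finset.mem_compl]
      constructor
      · rintro ⟨hbB, h⟩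
        have hI : insert b (A.erase a) = B := by rw [h, Finset.insert_erase hbB]
        refine ⟨fun hbA => hAB ?_, hI⟩
        have hba : b = a := by
          by_contra hne
          have : b ∈ A.erase a := Finset.mem_erase.mpr ⟨hne, hbA⟩
          rw [h] at this
          simp at this
        rw [← hI, hba, Finset.insert_erase ha]
      · rintro ⟨hbA, rfl⟩
        refine ⟨by simp, ?_⟩
        rw [Finset.erase_insert]
        intro h
        exact hbA (Finset.mem_of_mem_erase h)
    · rintro ⟨a, b⟩ hab ⟨a', b'⟩ hab' h h'
      simp only [Finset.mem_product] at hab hab' h h'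
      have key : ∀ x y : Fin n, x ∈ A → y ∈ B → A.erase x = B.erase y → x ∉ B ∧ y ∉ A := by
        intro x y hx hy hxy
        have hne : x ≠ y := by
          rintro rfl
          apply hAB
          rw [← Finset.insert_erase hx, hxy, Finset.insert_erase hy]
        constructor
        · intro hxB
          have : x ∈ B.erase y := Finset.mem_erase.mpr ⟨hne, hxB⟩
          rw [← hxy] at this
          simp at this
        · intro hyA
          have : y ∈ A.erase x := Finset.mem_erase.mpr ⟨hne.symm, hyA⟩
          rw [hxy] at this
          simp at this
      have k1 := key a b hab.1 hab.2 h
      have k2 := key a' b' hab'.1 hab'.2 h'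
      have e1 : a = a' := by
        by_contra hne
        have : a ∈ A.erase a' := Finset.mem_erase.mpr ⟨hne, hab.1⟩
        rw [h'] at this
        exact k1.1 (Finset.mem_of_mem_erase this)
      have e2 : b = b' := by
        by_contra hne
        have : b ∈ B.erase b' := Finset.mem_erase.mpr ⟨hne, hab.2⟩
        rw [← h'] at this
        exact k1.2 (Finset.mem_of_mem_erase this)
      rw [e1, e2]

lemma C_ite_mul (P : Prop) [Decidable P] (r : ℝ) (p : ℝ[X]) :
    C (if P then r else 0) * p = if P then C r * p else 0 := by
  split_ifs <;> simp

lemma sum_empty_part {n : ℕ} (F : ℕ → ℝ[X]) :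
    ∑ A : Finset (Fin n), ∑ B : Finset (Fin n), C (hb ∅ A B ^ 2) * F (A.card + B.card) =
      ∑ A : Finset (Fin n), F (2 * A.card) := by
  apply Finset.sum_congr rfl
  intro A _
  simp only [hb_empty, ite_pow, one_pow, ne_eq, OfNat.ofNat_ne_zero, not_false_eq_true, zero_pow,
    C_ite_mul, Finset.sum_ite_eq, Finset.mem_univ, if_true]
  rw [C_1, one_mul, two_mul]

lemma sum_u_part {n : ℕ} (F : ℕ → ℝ[X]) :
    ∑ A : Finset (Fin n), ∑ B : Finset (Fin n),
      C (hb {false} A B ^ 2) * F (1 + (A.card + B.card)) =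
      ∑ A : Finset (Fin n), C (A.card : ℝ) * F (2 * A.card) := by
  apply Finset.sum_congr rfl
  intro A _
  simp only [hb_u_sq, map_sum, Finset.sum_mul, C_ite_mul]
  rw [Finset.sum_comm]
  simp only [Finset.sum_ite_eq, Finset.mem_univ, if_true]
  rw [Finset.sum_congr rfl (g := fun _ => F (2 * A.card))]
  · simp
  · intro a ha
    have := Finset.card_erase_add_one ha
    rw [C_1, one_mul]
    congr 1
    omega

lemma sum_v_part {n : ℕ} (F : ℕ → ℝ[X]) :
    ∑ A : Finset (Fin n), ∑ B : Finset (Fin n),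
      C (hb {true} A B ^ 2) * F (1 + (A.card + B.card)) =
      ∑ A : Finset (Fin n), C (A.card : ℝ) * F (2 * A.card) := by
  rw [Finset.sum_comm]
  apply Finset.sum_congr rfl
  intro A _
  simp only [hb_v_sq, map_sum, Finset.sum_mul, C_ite_mul]
  rw [Finset.sum_comm]
  simp only [Finset.sum_ite_eq', Finset.mem_univ, if_true]
  rw [Finset.sum_congr rfl (g := fun _ => F (2 * A.card))]
  · simp
  · intro a ha
    have := Finset.card_erase_add_one ha
    rw [C_1, one_mul]
    congr 1
    omega

lemma sum_uv_part {n : ℕ} (F : ℕ → ℝ[X]) :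
    ∑ A : Finset (Fin n), ∑ B : Finset (Fin n),
      C (hb {false, true} A B ^ 2) * F (2 + (A.card + B.card)) =
      ∑ A : Finset (Fin n), C (1 + (n + 2 : ℝ) * A.card) * F (2 * A.card + 2) := by
  apply Finset.sum_congr rfl
  intro A _
  simp only [hb_uv_sq, map_add, add_mul, map_sum, Finset.sum_mul, C_ite_mul]
  rw [Finset.sum_add_distrib, Finset.sum_comm (s := Finset.univ) (t := A)]
  have h : ∀ a ∈ A, ∑ B : Finset (Fin n), ∑ b ∈ Aᶜ,
      (if insert b (A.erase a) = B then C 1 * F (2 + (A.card + B.card)) else 0) =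
      C ((n : ℝ) - A.card) * F (2 * A.card + 2) := by
    intro a ha
    rw [Finset.sum_comm]
    simp only [Finset.sum_ite_eq, Finset.mem_univ, if_true]
    rw [Finset.sum_congr rfl (g := fun _ => F (2 * A.card + 2))]
    · rw [Finset.sum_const, Finset.card_compl, Fintype.card_fin, nsmul_eq_mul,
        Nat.cast_sub (by simpa using Finset.card_le_univ A)]
      simp
    · intro b hb'
      have h1 := Finset.card_erase_add_one ha
      have h2 : (insert b (A.erase a)).card = (A.erase a).card + 1 := by
        apply Finset.card_insert_of_notMem
        intro h
        exact (Finset.mem_compl.mp hb') (Finset.mem_of_mem_erase h)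
      rw [C_1, one_mul]
      congr 1
      omega
  rw [Finset.sum_congr rfl h]
  simp only [Finset.sum_ite_eq, Finset.mem_univ, if_true, Finset.sum_const, nsmul_eq_mul]
  rw [show 2 + (A.card + A.card) = 2 * A.card + 2 by ring]
  simp only [map_add, map_sub, map_mul, map_pow, map_natCast, map_one, map_ofNat]
  ring

lemma sum_card_weight (N : ℕ) (y z : ℝ[X]) :
    ∑ A : Finset (Fin (N + 1)), (A.card : ℝ[X]) * (y ^ A.card * z ^ (N + 1 - A.card)) =
      (N + 1 : ℝ[X]) * y * (y + z) ^ N := by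
  have h := Finset.sum_powerset_apply_card
    (fun k => (k : ℝ[X]) * (y ^ k * z ^ (N + 1 - k))) (x := (Finset.univ : Finset (Fin (N + 1))))
  rw [Finset.powerset_univ] at h
  rw [h, Finset.card_univ, Fintype.card_fin, Finset.sum_range_succ', add_pow, Finset.mul_sum]
  simp only [Nat.cast_zero, zero_mul, smul_zero, add_zero]
  apply Finset.sum_congr rfl
  intro k _
  have h1 : ((N + 1).choose (k + 1) : ℝ[X]) * (k + 1) = (N + 1) * N.choose k := by
    exact_mod_cast (Nat.add_one_mul_choose_eq N k).symm
  rw [nsmul_eq_mul, Nat.add_sub_add_right]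
  push_cast
  calc _ = (((N + 1).choose (k + 1) : ℝ[X]) * (k + 1)) * (y ^ (k + 1) * z ^ (N - k)) := by ring
    _ = _ := by rw [h1]; ring

lemma GBS_book_sum (n : ℕ) (F : ℕ → ℝ[X])
    (hF : ∀ c, F c = C ((-1 : ℝ) ^ (c / 2)) * X ^ (2 * n + 2 - c)) :
    GBS (bookAdj n) = ∑ W : Finset Bool, ∑ A : Finset (Fin n), ∑ B : Finset (Fin n),
      C (hb W A B ^ 2) * F (W.card + (A.card + B.card)) := by
  unfold GBS
  rw [← (Equiv.finsetCongr (bookEquiv n)).sum_comp,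
    ← (Finset.sumEquiv (α := Bool) (β := Fin n ⊕ Fin n)).symm.toEquiv.sum_comp,
    Fintype.sum_prod_type]
  apply Finset.sum_congr rfl
  intro W _
  rw [← (Finset.sumEquiv (α := Fin n) (β := Fin n)).symm.toEquiv.sum_comp,
    Fintype.sum_prod_type]
  apply Finset.sum_congr rfl
  intro A _
  apply Finset.sum_congr rfl
  intro B _
  have hS : (Equiv.finsetCongr (bookEquiv n)) ((Finset.sumEquiv.symm.toEquiv)
      (W, (Finset.sumEquiv.symm.toEquiv) (A, B))) = (SS W A B).map (bookEquiv n).toEmbedding := rfl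
  have hcard : (SS W A B).card = W.card + (A.card + B.card) := by
    simp [SS, Finset.card_disjSum]
  rw [hS, haf_subm_map, Finset.card_map, hcard, hF]
  have hG : (fun x y => bookAdj n (bookEquiv n x) (bookEquiv n y)) = bookG n := by
    funext x y
    exact bookAdj_equiv n x y
  rw [hG, C_mul, hb]
  ring

/-- The GBS polynomial of the book graph `B_n`. -/
theorem gbs_book (n : ℕ) (hn : 1 ≤ n) :
    GBS (bookAdj n) =
      (Polynomial.X ^ 2 - 1) ^ (n - 1) *
        (Polynomial.X ^ 2 - Polynomial.C ((n : ℝ) + 1)) ^ 2 := by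
  obtain ⟨N, rfl⟩ : ∃ N, n = N + 1 := ⟨n - 1, by omega⟩
  obtain ⟨F, hF⟩ : ∃ F : ℕ → ℝ[X], ∀ c, F c =
      C ((-1 : ℝ) ^ (c / 2)) * X ^ (2 * (N + 1) + 2 - c) := ⟨_, fun _ => rfl⟩
  rw [GBS_book_sum (N + 1) F hF]
  have hW : (Finset.univ : Finset (Finset Bool)) = {∅, {false}, {true}, {false, true}} := by
    decide
  rw [hW, Finset.sum_insert (by decide), Finset.sum_insert (by decide),
    Finset.sum_insert (by decide), Finset.sum_singleton]
  have hc : ({false, true} : Finset Bool).card = 2 := by decide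
  simp only [hc, Finset.card_singleton, Finset.card_empty, zero_add]
  rw [sum_empty_part, sum_u_part, sum_v_part, sum_uv_part]
  have hk : ∀ A : Finset (Fin (N + 1)), A.card ≤ N + 1 := fun A => by
    simpa using Finset.card_le_univ A
  have hF1 : ∀ A : Finset (Fin (N + 1)), F (2 * A.card) =
      X ^ 2 * ((-1) ^ A.card * (X ^ 2) ^ (N + 1 - A.card)) := by
    intro A
    have := hk A
    rw [hF, Nat.mul_div_cancel_left _ (by norm_num),
      show 2 * (N + 1) + 2 - 2 * A.card = 2 + 2 * (N + 1 - A.card) by omega, pow_add, pow_mul]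
    simp only [map_pow, map_neg, map_one]
    ring
  have hF2 : ∀ A : Finset (Fin (N + 1)), F (2 * A.card + 2) =
      -((-1) ^ A.card * (X ^ 2) ^ (N + 1 - A.card)) := by
    intro A
    have := hk A
    rw [hF, show (2 * A.card + 2) / 2 = A.card + 1 by omega,
      show 2 * (N + 1) + 2 - (2 * A.card + 2) = 2 * (N + 1 - A.card) by omega, pow_mul]
    simp only [map_pow, map_neg, map_one]
    ring
  have s0 : ∑ A : Finset (Fin (N + 1)), ((-1 : ℝ[X]) ^ A.card * (X ^ 2) ^ (N + 1 - A.card)) =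
      (-1 + X ^ 2) ^ (N + 1) := by
    have := Fintype.sum_pow_mul_eq_add_pow (Fin (N + 1)) (-1 : ℝ[X]) (X ^ 2)
    simpa using this
  have s1 := sum_card_weight N (-1) (X ^ 2)
  have e1 : ∑ A : Finset (Fin (N + 1)), C (A.card : ℝ) * F (2 * A.card) =
      X ^ 2 * ((N + 1 : ℝ[X]) * (-1) * (-1 + X ^ 2) ^ N) := by
    rw [← s1, Finset.mul_sum]
    apply Finset.sum_congr rfl
    intro A _
    rw [hF1, map_natCast]
    ring
  have e0 : ∑ A : Finset (Fin (N + 1)), F (2 * A.card) = X ^ 2 * (-1 + X ^ 2) ^ (N + 1) := by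
    rw [← s0, Finset.mul_sum]
    exact Finset.sum_congr rfl fun A _ => hF1 A
  have e2 : ∑ A : Finset (Fin (N + 1)), C (1 + (((N + 1 : ℕ) : ℝ) + 2) * A.card) *
      F (2 * A.card + 2) =
      -(-1 + X ^ 2) ^ (N + 1) -
        ((N : ℝ[X]) + 3) * ((N + 1 : ℝ[X]) * (-1) * (-1 + X ^ 2) ^ N) := by
    rw [← s0, ← s1, Finset.mul_sum, ← Finset.sum_neg_distrib, ← Finset.sum_sub_distrib]
    apply Finset.sum_congr rfl
    intro A _
    rw [hF2]
    simp only [map_add, map_mul, map_natCast, map_one, map_ofNat]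
    push_cast
    ring
  rw [e0, e1, e2, Nat.add_sub_cancel]
  simp only [map_add, map_natCast, map_one]
  push_cast
  ring
end
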